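/- Let b > 1 and define I : ℝ → [0,∞] by I(w) = (w − 1/2)²/2 if w ≥ 1/2 or w ≤ −b − 1/2, and I(w) = +∞ otherwise. Then I(1/2) = 0, and −2 belongs to the subdifferential ∂I(1/2) if and only if b ≥ 3; moreover, the infimum of the slopes of supporting lines of I at the point w = 1/2 is −(b+1)/2, attained by the line through the points (−b − 1/2, I(−b − 1/2)) and (1/2, 0). -/

import Mathlib

open MeasureTheory Filter Set Topology
open scoped ENNReal NNReal

/-- A sequence of measures satisfies the large deviation principle with rate function `I`:
upper bound over closed sets and lower bound over open sets, at exponential speed `n`. -/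
def SatisfiesLDP {X : Type*} [TopologicalSpace X] [MeasurableSpace X]
    (mu : ℕ → Measure X) (I : X → ℝ≥0∞) : Prop :=
  (∀ F : Set X, IsClosed F →
      limsup (fun n : ℕ => (((n : ℝ)⁻¹ : ℝ) : EReal) * ENNReal.log (mu n F)) atTop
        ≤ -(⨅ x ∈ F, (I x : EReal))) ∧
  (∀ G : Set X, IsOpen G →
      -(⨅ x ∈ G, (I x : EReal)) ≤
        liminf (fun n : ℕ => (((n : ℝ)⁻¹ : ℝ) : EReal) * ENNReal.log (mu n G)) atTop)

/-- A good rate function: lower semicontinuous with compact sublevel sets. -/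
def IsGoodRate {X : Type*} [TopologicalSpace X] (I : X → ℝ≥0∞) : Prop :=
  LowerSemicontinuous I ∧ ∀ c : ℝ≥0∞, c ≠ ⊤ → IsCompact {x | I x ≤ c}

/-- The subdifferential of an extended-real-valued function on ℝ at a point. -/
def Subdiff (f : ℝ → EReal) (x : ℝ) : Set ℝ :=
  {k | ∀ y : ℝ, f x + ((k * (y - x) : ℝ) : EReal) ≤ f y}

/-- `(1/n) log x` as an extended real number. -/
noncomputable def expRate (n : ℕ) (x : ℝ≥0∞) : EReal :=
  (((n : ℝ)⁻¹ : ℝ) : EReal) * ENNReal.log x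

/-- The action `W_n = -(1/n) log (dP/dQ)`. -/
noncomputable def action {Λ : Type*} [MeasurableSpace Λ]
    (P Q : Measure Λ) (n : ℕ) (x : Λ) : ℝ :=
  -(n : ℝ)⁻¹ * Real.log ((P.rnDeriv Q) x).toReal


/-- The conditional rate function `I_Q^B` for the Gaussian sample mean with the nonconvex set
`B = (-∞, -b] ∪ [1, ∞)`: `I(1/2) = 0`; `-2 ∈ ∂I(1/2)` iff `b ≥ 3`; and the least slope of a
supporting line of `I` at `1/2` is `-(b+1)/2`, attained by the line through the points
`(-b - 1/2, I(-b - 1/2))` and `(1/2, 0)`. -/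
theorem nonconvex_gaussian_rate (b : ℝ) (hb : 1 < b)
    (I : ℝ → ℝ≥0∞)
    (hI : ∀ w : ℝ, I w =
      if 1 / 2 ≤ w ∨ w ≤ -b - 1 / 2 then ENNReal.ofReal ((w - 1 / 2) ^ 2 / 2) else ⊤) :
    I (1 / 2) = 0 ∧
    ((-2 : ℝ) ∈ Subdiff (fun w : ℝ => (I w : EReal)) (1 / 2) ↔ 3 ≤ b) ∧
    IsLeast (Subdiff (fun w : ℝ => (I w : EReal)) (1 / 2)) (-(b + 1) / 2) ∧
    (I (-b - 1 / 2) : EReal) = (((-(b + 1) / 2) * ((-b - 1 / 2) - 1 / 2) : ℝ) : EReal) := by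
  have h0 : I (1 / 2) = 0 := by rw [hI]; simp
  have hval : ∀ w : ℝ, (1 / 2 ≤ w ∨ w ≤ -b - 1 / 2) →
      (I w : EReal) = (((w - 1 / 2) ^ 2 / 2 : ℝ) : EReal) := by
    intro w hw
    rw [hI, if_pos hw, EReal.coe_ennreal_ofReal, max_eq_left (by positivity)]
  have key : ∀ k : ℝ, k ≤ 0 →
      (k ∈ Subdiff (fun w : ℝ => (I w : EReal)) (1 / 2) ↔ -(b + 1) / 2 ≤ k) := by
    intro k hk
    simp only [Subdiff, Set.mem_setOf_eq, h0, EReal.coe_ennreal_zero, zero_add]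
    constructor
    · intro h
      have h1 := h (-b - 1 / 2)
      rw [hval _ (Or.inr le_rfl), EReal.coe_le_coe_iff] at h1
      by_contra hc
      push Not at hc
      nlinarith
    · intro h y
      by_cases hy : 1 / 2 ≤ y ∨ y ≤ -b - 1 / 2
      · rw [hval _ hy, EReal.coe_le_coe_iff]
        rcases hy with hy | hy
        · nlinarith [sq_nonneg (y - 1 / 2), mul_nonneg (neg_nonneg.2 hk) (sub_nonneg.2 hy)]
        · nlinarith
      · rw [hI, if_neg hy]; simp
  refine ⟨h0, ?_, ⟨(key _ (by linarith)).2 le_rfl, ?_⟩, ?_⟩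
  · rw [key _ (by norm_num)]
    constructor <;> intro h <;> linarith
  · intro k hk
    by_cases hk0 : k ≤ 0
    · exact (key k hk0).1 hk
    · linarith
  · rw [hval _ (Or.inr le_rfl)]
    congr 1
    ring
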